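/- Let h, g : [0,1] → [0,∞) be lower semicontinuous, let ε > 0 and 0 < δ ≤ ε. Suppose the Hausdorff distance between the epigraphs epi(h) and epi(g) in ℝ² is at most δ. Let s, t ∈ [0,1] be such that |h(s) − g(s)| ≤ δ, |h(t) − g(t)| ≤ δ, and neither s nor t lies in A_δ := {u ∈ [0,1] : inf{h(v) : v ∈ [u−δ, u+δ] ∩ [0,1]} < h(u) − ε}. Then |I_h(s,t) − I_g(s,t)| ≤ 2ε, where I_f(s,t) = inf{f(u) : u ∈ [min(s,t), max(s,t)]}. -/

import Mathlib

open MeasureTheory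

/-- `I_f(s,t) = inf { f(u) : u ∈ [min(s,t), max(s,t)] }`. -/
noncomputable def treeInf (f : unitInterval → ℝ) (s t : unitInterval) : ℝ :=
  sInf (f '' Set.Icc (min s t) (max s t))

/-- The epigraph `epi(f) = {(t, y) ∈ [0,1] × [0,∞) : y ≥ f(t)}` of `f : [0,1] → [0,∞)`,
viewed as a subset of `ℝ²`. -/
def epigraph (f : unitInterval → ℝ) : Set (ℝ × ℝ) :=
  {p | ∃ t : unitInterval, (t : ℝ) = p.1 ∧ 0 ≤ p.2 ∧ f t ≤ p.2}

/-- The infimum of `h` over the window `[u-δ, u+δ] ∩ [0,1]`. -/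
noncomputable def windowInf (h : unitInterval → ℝ) (δ : ℝ) (u : unitInterval) : ℝ :=
  sInf (h '' {v : unitInterval | |(v : ℝ) - (u : ℝ)| ≤ δ})

/-- `A_δ = {u ∈ [0,1] : inf {h(v) : v ∈ [u-δ, u+δ] ∩ [0,1]} < h(u) - ε}`. -/
def badSet (h : unitInterval → ℝ) (ε δ : ℝ) : Set unitInterval :=
  {u | windowInf h δ u < h u - ε}

/-!
Let `u` lie between `s` and `t`. A point of the one epigraph close to `(u, f u)` lies over some `v`
close to `u`. If `v` is also between `s` and `t`, it bounds the other infimum from above; otherwise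
an endpoint `w ∈ {s, t}` separates `u` from `v`, so both are close to `w`, and `w ∉ A_δ` makes `h w`
at most `h u + ε` and `h v + ε`.

The Hausdorff bound only provides points within `r` for every `r > δ`, whereas `A_δ` sees only the
closed window of radius `δ`. Additivity of distance along `u, w, v` closes this gap: for `u` it
suffices to let `r → δ`, and for `v` to take `r - δ` below `dist u w`, unless `u = w`, where `h` and
`g` are already `δ`-close.
-/

theorem exists_endpoint_mem_uIcc {α : Type*} [LinearOrder α] {s t u v : α}
    (hu : u ∈ Set.uIcc s t) (hv : v ∉ Set.uIcc s t) :
    ∃ w ∈ ({s, t} : Set α), w ∈ Set.uIcc u v := by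
  rcases le_or_gt (min s t) v with hmin | hmin
  · have hmax : max s t < v := not_le.1 fun hmax => hv ⟨hmin, hmax⟩
    exact ⟨max s t, max_choice s t, Set.mem_uIcc_of_le hu.2 hmax.le⟩
  · exact ⟨min s t, min_choice s t, Set.mem_uIcc_of_ge hmin.le hu.1⟩

theorem dist_add_dist_of_mem_uIcc {S : Set ℝ} {u v w : S} (hw : w ∈ Set.uIcc u v) :
    dist u w + dist w v = dist u v := by
  have hw' : (w : ℝ) ∈ segment ℝ (u : ℝ) v := by
    rw [segment_eq_uIcc, Set.mem_uIcc]
    exact Set.mem_uIcc.1 hw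
  exact dist_add_dist_of_mem_segment hw'

section Infima

variable {f : unitInterval → ℝ} {s t u v : unitInterval} {c ε δ : ℝ}

theorem treeInf_le (hf : BddBelow (Set.range f)) (hu : u ∈ Set.uIcc s t) : treeInf f s t ≤ f u :=
  csInf_le (hf.mono (Set.image_subset_range f _)) (Set.mem_image_of_mem f hu)

theorem le_treeInf (hc : ∀ u ∈ Set.uIcc s t, c ≤ f u) : c ≤ treeInf f s t :=
  le_csInf (Set.nonempty_uIcc.image f) (Set.forall_mem_image.2 hc)

theorem treeInf_le_of_mem_pair (hf : BddBelow (Set.range f))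
    (hu : u ∈ ({s, t} : Set unitInterval)) : treeInf f s t ≤ f u := by
  rcases hu with rfl | rfl
  · exact treeInf_le hf Set.left_mem_uIcc
  · exact treeInf_le hf Set.right_mem_uIcc

theorem windowInf_le (hf : BddBelow (Set.range f)) (hv : dist u v ≤ δ) : windowInf f δ u ≤ f v :=
  csInf_le (hf.mono (Set.image_subset_range f _))
    (Set.mem_image_of_mem f ((dist_comm v u).trans_le hv))

theorem le_add_of_notMem_badSet (hf : BddBelow (Set.range f)) (hu : u ∉ badSet f ε δ)
    (hv : dist u v ≤ δ) : f u ≤ f v + ε :=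
  sub_le_iff_le_add.1 ((not_lt.1 hu).trans (windowInf_le hf hv))

theorem nonneg_of_notMem_badSet (hf : BddBelow (Set.range f)) (hδ : 0 ≤ δ)
    (hu : u ∉ badSet f ε δ) : 0 ≤ ε :=
  le_add_iff_nonneg_right (f u) |>.1 (le_add_of_notMem_badSet hf hu ((dist_self u).trans_le hδ))

end Infima

section Epigraph

variable {f k : unitInterval → ℝ} {s t u : unitInterval} {δ r : ℝ}

theorem exists_dist_lt_of_hausdorffEDist_epigraph_lt
    (hH : Metric.hausdorffEDist (epigraph f) (epigraph k) < ENNReal.ofReal r) (hfu : 0 ≤ f u) :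
    ∃ v, dist u v < r ∧ k v < f u + r := by
  have hmem : ((u : ℝ), f u) ∈ epigraph f := ⟨u, rfl, hfu, le_rfl⟩
  obtain ⟨⟨x, y⟩, ⟨v, rfl, -, hkv⟩, hdist⟩ := Metric.exists_edist_lt_of_hausdorffEDist_lt hmem hH
  obtain ⟨huv, hy⟩ : dist (u : ℝ) v < r ∧ dist (f u) y < r := by
    rwa [edist_lt_ofReal, Prod.dist_eq, max_lt_iff] at hdist
  have hyf : y - f u < r := (abs_lt.1 ((dist_comm y (f u)).trans_lt hy)).2
  exact ⟨v, huv, by linarith⟩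

theorem treeInf_le_or_exists_endpoint (hk : BddBelow (Set.range k)) (hδ : 0 ≤ δ)
    (hH : Metric.hausdorffEDist (epigraph f) (epigraph k) ≤ ENNReal.ofReal δ)
    (hu : u ∈ Set.uIcc s t) (hfu : 0 ≤ f u) :
    treeInf k s t ≤ f u + δ ∨ ∃ w ∈ ({s, t} : Set unitInterval),
      ∀ r > δ, ∃ v, dist u w + dist w v < r ∧ k v < f u + r := by
  by_contra! ⟨hlt, hend⟩
  obtain ⟨rs, hrs, hs⟩ := hend s (Set.mem_insert s {t})
  obtain ⟨rt, hrt, ht⟩ := hend t (Set.mem_insert_of_mem s rfl)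
  obtain ⟨r, hδr, hr⟩ : ∃ r, δ < r ∧ r < min (treeInf k s t - f u) (min rs rt) :=
    exists_between (lt_min (lt_sub_iff_add_lt'.2 hlt) (lt_min hrs hrt))
  obtain ⟨hrI, hr_rs, hr_rt⟩ : r < treeInf k s t - f u ∧ r < rs ∧ r < rt := by
    simpa only [lt_min_iff] using hr
  have hHr : Metric.hausdorffEDist (epigraph f) (epigraph k) < ENNReal.ofReal r :=
    hH.trans_lt ((ENNReal.ofReal_lt_ofReal_iff_of_nonneg hδ).2 hδr)
  obtain ⟨v, huv, hkv⟩ := exists_dist_lt_of_hausdorffEDist_epigraph_lt hHr hfu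
  have hv : v ∉ Set.uIcc s t := fun hv => by linarith [treeInf_le hk hv]
  obtain ⟨w, hw, hwuv⟩ := exists_endpoint_mem_uIcc hu hv
  have hdist : dist u w + dist w v < r := (dist_add_dist_of_mem_uIcc hwuv).trans_lt huv
  rcases hw with rfl | rfl
  · linarith [hs v (hdist.trans hr_rs)]
  · linarith [ht v (hdist.trans hr_rt)]

end Epigraph

section Comparison

variable {h g : unitInterval → ℝ} {ε δ : ℝ} {s t : unitInterval}

theorem treeInf_le_add_of_forall_notMem_badSet_right
    (hnn : ∀ u, 0 ≤ h u) (hg : BddBelow (Set.range g)) (hδ : 0 ≤ δ)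
    (hH : Metric.hausdorffEDist (epigraph h) (epigraph g) ≤ ENNReal.ofReal δ)
    (hgh : ∀ w ∈ ({s, t} : Set unitInterval), g w ≤ h w + δ)
    (hbad : ∀ w ∈ ({s, t} : Set unitInterval), w ∉ badSet h ε δ) :
    treeInf g s t ≤ treeInf h s t + (ε + δ) := by
  have hh : BddBelow (Set.range h) := ⟨0, Set.forall_mem_range.2 hnn⟩
  have hε : 0 ≤ ε := nonneg_of_notMem_badSet hh hδ (hbad s (Set.mem_insert s {t}))
  refine sub_le_iff_le_add.1 (le_treeInf fun u hu => sub_le_iff_le_add.2 ?_)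
  rcases treeInf_le_or_exists_endpoint hg hδ hH hu (hnn u) with hle | ⟨w, hw, hnear⟩
  · linarith
  · have hwu : dist w u ≤ δ := by
      refine le_of_forall_gt_imp_ge_of_dense fun r hr => ?_
      obtain ⟨v, hv, -⟩ := hnear r hr
      linarith [dist_comm w u, dist_nonneg (x := w) (y := v)]
    calc treeInf g s t ≤ g w := treeInf_le_of_mem_pair hg hw
      _ ≤ h w + δ := hgh w hw
      _ ≤ h u + ε + δ := by gcongr; exact le_add_of_notMem_badSet hh (hbad w hw) hwu
      _ = h u + (ε + δ) := add_assoc _ _ _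

theorem le_add_of_notMem_badSet_of_forall_near {u w : unitInterval} {c : ℝ}
    (hh : BddBelow (Set.range h)) (hw : w ∉ badSet h ε δ) (huw : u ≠ w)
    (hnear : ∀ r > δ, ∃ v, dist u w + dist w v < r ∧ h v < c + r) :
    h w ≤ c + (ε + δ) := by
  by_contra! hlt
  obtain ⟨r, hδr, hr⟩ : ∃ r, δ < r ∧ r < min (δ + dist u w) (h w - c - ε) :=
    exists_between (lt_min (lt_add_of_pos_right δ (dist_pos.2 huw)) (by linarith))
  obtain ⟨hr_dist, hr_gap⟩ := lt_min_iff.1 hr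
  obtain ⟨v, hv, hhv⟩ := hnear r hδr
  have hwv : dist w v ≤ δ := by linarith
  linarith [le_add_of_notMem_badSet hh hw hwv]

theorem treeInf_le_add_of_forall_notMem_badSet_left
    (hh : BddBelow (Set.range h)) (gnn : ∀ u, 0 ≤ g u) (hδ : 0 ≤ δ)
    (hH : Metric.hausdorffEDist (epigraph g) (epigraph h) ≤ ENNReal.ofReal δ)
    (hhg : ∀ w ∈ ({s, t} : Set unitInterval), h w ≤ g w + δ)
    (hbad : ∀ w ∈ ({s, t} : Set unitInterval), w ∉ badSet h ε δ) :
    treeInf h s t ≤ treeInf g s t + (ε + δ) := by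
  have hε : 0 ≤ ε := nonneg_of_notMem_badSet hh hδ (hbad s (Set.mem_insert s {t}))
  refine sub_le_iff_le_add.1 (le_treeInf fun u hu => sub_le_iff_le_add.2 ?_)
  rcases treeInf_le_or_exists_endpoint hh hδ hH hu (gnn u) with hle | ⟨w, hw, hnear⟩
  · linarith
  · refine (treeInf_le_of_mem_pair hh hw).trans ?_
    rcases eq_or_ne u w with rfl | huw
    · linarith [hhg u hw]
    · exact le_add_of_notMem_badSet_of_forall_near hh (hbad w hw) huw hnear

end Comparison

theorem abs_treeInf_sub_treeInf_le_general {h g : unitInterval → ℝ}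
    (hnn : ∀ t, 0 ≤ h t) (gnn : ∀ t, 0 ≤ g t) {ε δ : ℝ}
    (hH : Metric.hausdorffEDist (epigraph h) (epigraph g) ≤ ENNReal.ofReal δ)
    {s t : unitInterval} (hs : |h s - g s| ≤ δ) (ht : |h t - g t| ≤ δ)
    (hsA : s ∉ badSet h ε δ) (htA : t ∉ badSet h ε δ) :
    |treeInf h s t - treeInf g s t| ≤ ε + δ := by
  have hδ : 0 ≤ δ := (abs_nonneg _).trans hs
  have hclose : ∀ w ∈ ({s, t} : Set unitInterval), |h w - g w| ≤ δ := by
    rintro w (rfl | rfl) <;> assumption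
  have hbad : ∀ w ∈ ({s, t} : Set unitInterval), w ∉ badSet h ε δ := by
    rintro w (rfl | rfl) <;> assumption
  refine abs_sub_le_iff.2 ⟨sub_le_iff_le_add'.2 ?_, sub_le_iff_le_add'.2 ?_⟩
  · exact treeInf_le_add_of_forall_notMem_badSet_left ⟨0, Set.forall_mem_range.2 hnn⟩ gnn hδ
      (Metric.hausdorffEDist_comm.trans_le hH)
      (fun w hw => sub_le_iff_le_add'.1 (abs_sub_le_iff.1 (hclose w hw)).1) hbad
  · exact treeInf_le_add_of_forall_notMem_badSet_right hnn ⟨0, Set.forall_mem_range.2 gnn⟩ hδ hH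
      (fun w hw => sub_le_iff_le_add'.1 (abs_sub_le_iff.1 (hclose w hw)).2) hbad

/-- Let `h, g` be lower semicontinuous `[0,1] → [0,∞)`, `0 < δ ≤ ε`,
with Hausdorff distance between the epigraphs at most `δ`. If `|h - g| ≤ δ` at `s` and `t`
and neither `s` nor `t` lies in `A_δ`, then `|I_h(s,t) - I_g(s,t)| ≤ 2ε`. -/
theorem abs_treeInf_sub_treeInf_le
    (h g : unitInterval → ℝ)
    (hlsc : LowerSemicontinuous h) (glsc : LowerSemicontinuous g)
    (hnn : ∀ t, 0 ≤ h t) (gnn : ∀ t, 0 ≤ g t)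
    (ε δ : ℝ) (hε : 0 < ε) (hδ : 0 < δ) (hδε : δ ≤ ε)
    (hH : EMetric.hausdorffEdist (epigraph h) (epigraph g) ≤ ENNReal.ofReal δ)
    (s t : unitInterval)
    (hs : |h s - g s| ≤ δ) (ht : |h t - g t| ≤ δ)
    (hsA : s ∉ badSet h ε δ) (htA : t ∉ badSet h ε δ) :
    |treeInf h s t - treeInf g s t| ≤ 2 * ε := by
  linarith [abs_treeInf_sub_treeInf_le_general hnn gnn hH hs ht hsA htA]
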